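/- Let S = ⟨S, δ, L⟩ and S' = ⟨S', δ', L'⟩ be fuzzy labeled transition systems that are witnessed w.r.t. fposΔPDL, and let Z be a crisp directed simulation between S and S'. Then for every formula φ of fposΔPDL and all states x ∈ S, x' ∈ S', if Z(x,x') holds then φ^S(x) ≤ φ^S'(x'). -/

import Mathlib

open unitInterval

noncomputable section
attribute [local instance] Classical.propDecidable

instance : Fact ((0:ℝ) ≤ 1) := ⟨zero_le_one⟩

/-- A left-continuous t-norm on the unit interval `[0,1]`: a commutative, associative
binary operation with neutral element `1`, increasing in both arguments, that
distributes over suprema of nonempty sets (left-continuity). -/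
structure Tnorm where
  mul : I → I → I
  mul_comm : ∀ x y, mul x y = mul y x
  mul_assoc : ∀ x y z, mul (mul x y) z = mul x (mul y z)
  mul_one : ∀ x, mul x 1 = x
  mul_le_mul : ∀ {a b c d : I}, a ≤ b → c ≤ d → mul a c ≤ mul b d
  left_continuous : ∀ (x : I) (s : Set I), s.Nonempty → mul x (sSup s) = sSup (mul x '' s)

/-- The residuum of a t-norm: `(x ⇒ y) = sup {z | z ⊗ x ≤ y}`. -/
def Tnorm.res (T : Tnorm) (x y : I) : I := sSup {z : I | T.mul z x ≤ y}

/-- A fuzzy labeled transition system over actions `A`, propositions `P`, states `St`. -/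
structure FLTS (A P St : Type) where
  delta : St → A → St → I
  label : St → P → I

/-- A crisp directed simulation between two FLTSs. -/
def IsDirSimulation {A P S S' : Type} (M : FLTS A P S) (M' : FLTS A P S')
    (Z : S → S' → Prop) : Prop :=
  (∀ x x', Z x x' → ∀ p, M.label x p ≤ M'.label x' p) ∧
  (∀ x y x' (ρ : A), Z x x' → 0 < M.delta x ρ y →
    ∃ y', M.delta x ρ y ≤ M'.delta x' ρ y' ∧ Z y y') ∧
  (∀ x x' y' (ρ : A), Z x x' → 0 < M'.delta x' ρ y' →
    ∃ y, M'.delta x' ρ y' ≤ M.delta x ρ y ∧ Z y y')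

mutual
/-- Formulas of fposΔPDL. -/
inductive PForm (A P : Type) : Type
  | const : I → PForm A P
  | prop : P → PForm A P
  | baaz : PForm A P → PForm A P
  | and : PForm A P → PForm A P → PForm A P
  | or : PForm A P → PForm A P → PForm A P
  | impl : I → PForm A P → PForm A P
  | dia : PEProg A P → PForm A P → PForm A P
  | box : PUProg A P → PForm A P → PForm A P
/-- Programs of fpos∃ΔPDL. -/
inductive PEProg (A P : Type) : Type
  | act : A → PEProg A P
  | comp : PEProg A P → PEProg A P → PEProg A P
  | union : PEProg A P → PEProg A P → PEProg A P
  | star : PEProg A P → PEProg A P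
  | test : PForm A P → PEProg A P
/-- Programs of fpos∀ΔPDL; `testImp φ a` is the program `(φ→a)?`. -/
inductive PUProg (A P : Type) : Type
  | act : A → PUProg A P
  | comp : PUProg A P → PUProg A P → PUProg A P
  | union : PUProg A P → PUProg A P → PUProg A P
  | star : PUProg A P → PUProg A P
  | testImp : PForm A P → I → PUProg A P
end

/-- The ⊗-product of the values of `r` along the path `x :: l`. -/
def chainProd (T : Tnorm) {St : Type} (r : St → St → I) : St → List St → I
  | _, [] => 1
  | x, y :: l => T.mul (r x y) (chainProd T r y l)

mutual
/-- Semantics of fposΔPDL formulas. -/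
def pformSem (T : Tnorm) {A P St : Type} (M : FLTS A P St) : PForm A P → St → I
  | .const a, _ => a
  | .prop p, x => M.label x p
  | .baaz φ, x => if pformSem T M φ x = 1 then 1 else 0
  | .and φ ψ, x => min (pformSem T M φ x) (pformSem T M ψ x)
  | .or φ ψ, x => max (pformSem T M φ x) (pformSem T M ψ x)
  | .impl a φ, x => T.res a (pformSem T M φ x)
  | .dia α φ, x => ⨆ y, T.mul (peSem T M α x y) (pformSem T M φ y)
  | .box γ φ, x => ⨅ y, T.res (puSem T M γ x y) (pformSem T M φ y)
/-- Semantics of fpos∃ΔPDL programs. -/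
def peSem (T : Tnorm) {A P St : Type} (M : FLTS A P St) : PEProg A P → St → St → I
  | .act ρ, x, y => M.delta x ρ y
  | .comp α β, x, y => ⨆ z, T.mul (peSem T M α x z) (peSem T M β z y)
  | .union α β, x, y => max (peSem T M α x y) (peSem T M β x y)
  | .star α, x, y =>
      sSup {v : I | ∃ l : List St, l.getLastD x = y ∧ v = chainProd T (peSem T M α) x l}
  | .test φ, x, y => if x = y then pformSem T M φ x else 0
/-- Semantics of fpos∀ΔPDL programs. -/
def puSem (T : Tnorm) {A P St : Type} (M : FLTS A P St) : PUProg A P → St → St → I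
  | .act ρ, x, y => M.delta x ρ y
  | .comp α β, x, y => ⨆ z, T.mul (puSem T M α x z) (puSem T M β z y)
  | .union α β, x, y => max (puSem T M α x y) (puSem T M β x y)
  | .star α, x, y =>
      sSup {v : I | ∃ l : List St, l.getLastD x = y ∧ v = chainProd T (puSem T M α) x l}
  | .testImp φ a, x, y => if x = y then T.res (pformSem T M φ x) a else 0
end

/-- An FLTS is witnessed w.r.t. fposΔPDL: every supremum (resp. infimum) occurring
in the semantic clauses is attained by a greatest (resp. least) element. -/
def WitnessedP (T : Tnorm) {A P St : Type} (M : FLTS A P St) : Prop :=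
  (∀ (α : PEProg A P) (φ : PForm A P) (x : St), ∃ y : St, ∀ z : St,
      T.mul (peSem T M α x z) (pformSem T M φ z) ≤
        T.mul (peSem T M α x y) (pformSem T M φ y)) ∧
  (∀ (γ : PUProg A P) (φ : PForm A P) (x : St), ∃ y : St, ∀ z : St,
      T.res (puSem T M γ x y) (pformSem T M φ y) ≤
        T.res (puSem T M γ x z) (pformSem T M φ z)) ∧
  (∀ (α β : PEProg A P) (x y : St), ∃ z : St, ∀ w : St,
      T.mul (peSem T M α x w) (peSem T M β w y) ≤
        T.mul (peSem T M α x z) (peSem T M β z y)) ∧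
  (∀ (α β : PUProg A P) (x y : St), ∃ z : St, ∀ w : St,
      T.mul (puSem T M α x w) (puSem T M β w y) ≤
        T.mul (puSem T M α x z) (puSem T M β z y)) ∧
  (∀ (α : PEProg A P) (x y : St), ∃ l : List St, l.getLastD x = y ∧
      ∀ l' : List St, l'.getLastD x = y →
        chainProd T (peSem T M α) x l' ≤ chainProd T (peSem T M α) x l) ∧
  (∀ (α : PUProg A P) (x y : St), ∃ l : List St, l.getLastD x = y ∧
      ∀ l' : List St, l'.getLastD x = y →
        chainProd T (puSem T M α) x l' ≤ chainProd T (puSem T M α) x l)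

theorem Tnorm.aux_pos (T : Tnorm) {a b : I} (h : 0 < T.mul a b) : 0 < a ∧ 0 < b := by
  have key : ∀ c d : I, T.mul c d ≤ c := fun c d => by
    have := T.mul_le_mul (le_refl c) (show d ≤ 1 from unitInterval.le_one')
    rwa [T.mul_one] at this
  refine ⟨lt_of_lt_of_le h (key a b), ?_⟩
  rw [T.mul_comm] at h
  exact lt_of_lt_of_le h (key b a)

theorem Tnorm.aux_res (T : Tnorm) {a b c d : I} (h : b ≤ a) (h2 : c ≤ d) :
    T.res a c ≤ T.res b d :=
  sSup_le_sSup fun _ hz => ((T.mul_le_mul le_rfl h).trans (le_trans hz h2) : _)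

/-- Forward simulation of fuzzy relations. -/
def FwdSim {S S' : Type} (Z : S → S' → Prop) (r : S → S → I) (r' : S' → S' → I) : Prop :=
  ∀ x y x', Z x x' → 0 < r x y → ∃ y', r x y ≤ r' x' y' ∧ Z y y'

theorem FwdSim.comp (T : Tnorm) {S S' : Type} {Z : S → S' → Prop} {r q : S → S → I}
    {r' q' : S' → S' → I} (hr : FwdSim Z r r') (hq : FwdSim Z q q')
    (w : ∀ x y, ∃ z, ∀ w, T.mul (r x w) (q w y) ≤ T.mul (r x z) (q z y)) :
    FwdSim Z (fun x y => ⨆ z, T.mul (r x z) (q z y))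
      (fun x y => ⨆ z, T.mul (r' x z) (q' z y)) := by
  intro x y x' hx h
  obtain ⟨z, hz⟩ := w x y
  have e : (⨆ z, T.mul (r x z) (q z y)) ≤ T.mul (r x z) (q z y) := iSup_le hz
  obtain ⟨h1, h2⟩ := T.aux_pos (lt_of_lt_of_le h e)
  obtain ⟨z', hz1, hz2⟩ := hr x z x' hx h1
  obtain ⟨y', hy1, hy2⟩ := hq z y z' hz2 h2
  exact ⟨y', (e.trans (T.mul_le_mul hz1 hy1)).trans
    (le_iSup (fun z => T.mul (r' x' z) (q' z y')) z'), hy2⟩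

theorem FwdSim.union {S S' : Type} {Z : S → S' → Prop} {r q : S → S → I}
    {r' q' : S' → S' → I} (hr : FwdSim Z r r') (hq : FwdSim Z q q') :
    FwdSim Z (fun x y => max (r x y) (q x y)) (fun x y => max (r' x y) (q' x y)) := by
  intro x y x' hx h
  rcases le_total (r x y) (q x y) with hl | hl
  · simp only [max_eq_right hl] at h ⊢
    obtain ⟨y', h1, h2⟩ := hq x y x' hx h
    exact ⟨y', le_max_of_le_right h1, h2⟩
  · simp only [max_eq_left hl] at h ⊢
    obtain ⟨y', h1, h2⟩ := hr x y x' hx h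
    exact ⟨y', le_max_of_le_left h1, h2⟩

theorem FwdSim.chain (T : Tnorm) {S S' : Type} {Z : S → S' → Prop} {r : S → S → I}
    {r' : S' → S' → I} (hr : FwdSim Z r r') (l : List S) : ∀ (x : S) (x' : S'), Z x x' →
    0 < chainProd T r x l → ∃ l' : List S', chainProd T r x l ≤ chainProd T r' x' l' ∧
      Z (l.getLastD x) (l'.getLastD x') := by
  induction l with
  | nil => intro x x' hx _; exact ⟨[], le_rfl, hx⟩
  | cons y l ih =>
    intro x x' hx h
    simp only [chainProd] at h ⊢
    obtain ⟨h1, h2⟩ := T.aux_pos h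
    obtain ⟨y', hy1, hy2⟩ := hr x y x' hx h1
    obtain ⟨l', hl1, hl2⟩ := ih y y' hy2 h2
    refine ⟨y' :: l', T.mul_le_mul hy1 hl1, ?_⟩
    rw [List.getLastD_cons, List.getLastD_cons]
    exact hl2

theorem FwdSim.star (T : Tnorm) {S S' : Type} {Z : S → S' → Prop} {r : S → S → I}
    {r' : S' → S' → I} (hr : FwdSim Z r r')
    (w : ∀ x y, ∃ l : List S, l.getLastD x = y ∧
      ∀ l' : List S, l'.getLastD x = y → chainProd T r x l' ≤ chainProd T r x l) :
    FwdSim Z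
      (fun x y => sSup {v : I | ∃ l : List S, l.getLastD x = y ∧ v = chainProd T r x l})
      (fun x y => sSup {v : I | ∃ l : List S', l.getLastD x = y ∧ v = chainProd T r' x l}) := by
  intro x y x' hx h
  obtain ⟨l, hl, hm⟩ := w x y
  have e : sSup {v : I | ∃ l : List S, l.getLastD x = y ∧ v = chainProd T r x l}
      ≤ chainProd T r x l := by
    apply sSup_le
    rintro v ⟨l', h1, rfl⟩
    exact hm l' h1
  obtain ⟨l', h1, h2⟩ := hr.chain T l x x' hx (lt_of_lt_of_le h e)
  rw [hl] at h2
  exact ⟨l'.getLastD x', (e.trans h1).trans (le_sSup ⟨l', rfl, rfl⟩), h2⟩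

theorem FwdSim.test {S S' : Type} {Z : S → S' → Prop} {f : S → I} {f' : S' → I}
    (hf : ∀ x x', Z x x' → f x ≤ f' x') :
    FwdSim Z (fun x y => if x = y then f x else 0) (fun x y => if x = y then f' x else 0) := by
  intro x y x' hx h
  by_cases e : x = y
  · subst e
    exact ⟨x', by simpa using hf x x' hx, hx⟩
  · simp [e] at h

mutual
theorem aux_form {A P S S' : Type} (T : Tnorm) (M : FLTS A P S) (M' : FLTS A P S')
    (hM : WitnessedP T M) (hM' : WitnessedP T M')
    (Z : S → S' → Prop) (hZ : IsDirSimulation M M' Z) :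
    ∀ (φ : PForm A P) (x : S) (x' : S'), Z x x' → pformSem T M φ x ≤ pformSem T M' φ x'
  | .const a, x, x', h => by simp only [pformSem]; exact le_rfl
  | .prop p, x, x', h => by simp only [pformSem]; exact hZ.1 x x' h p
  | .baaz φ, x, x', h => by
    have ih := aux_form T M M' hM hM' Z hZ φ x x' h
    simp only [pformSem]
    by_cases e : pformSem T M φ x = 1
    · rw [e] at ih
      have e' : pformSem T M' φ x' = 1 := le_antisymm unitInterval.le_one' ih
      rw [if_pos e, if_pos e']
    · rw [if_neg e]; exact unitInterval.nonneg'
  | .and φ ψ, x, x', h => by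
    simp only [pformSem]
    exact min_le_min (aux_form T M M' hM hM' Z hZ φ x x' h) (aux_form T M M' hM hM' Z hZ ψ x x' h)
  | .or φ ψ, x, x', h => by
    simp only [pformSem]
    exact max_le_max (aux_form T M M' hM hM' Z hZ φ x x' h) (aux_form T M M' hM hM' Z hZ ψ x x' h)
  | .impl a φ, x, x', h => by
    simp only [pformSem]
    exact T.aux_res le_rfl (aux_form T M M' hM hM' Z hZ φ x x' h)
  | .dia α φ, x, x', h => by
    have ih := aux_form T M M' hM hM' Z hZ φ
    have ih2 := aux_e T M M' hM hM' Z hZ α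
    simp only [pformSem]
    refine iSup_le fun y => ?_
    rcases (unitInterval.nonneg' (t := T.mul (peSem T M α x y) (pformSem T M φ y))).eq_or_lt
      with h0 | h0
    · rw [← h0]; exact unitInterval.nonneg'
    · obtain ⟨y', h1, h2⟩ := ih2 x y x' h (T.aux_pos h0).1
      exact (T.mul_le_mul h1 (ih y y' h2)).trans
        (le_iSup (fun y' => T.mul (peSem T M' α x' y') (pformSem T M' φ y')) y')
  | .box γ φ, x, x', h => by
    have ih := aux_form T M M' hM hM' Z hZ φ
    have ih2 := aux_u T M M' hM hM' Z hZ γ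
    simp only [pformSem]
    refine le_iInf fun y' => ?_
    rcases (unitInterval.nonneg' (t := puSem T M' γ x' y')).eq_or_lt with h0 | h0
    · rw [← h0]
      refine le_trans unitInterval.le_one' (le_sSup ?_)
      change T.mul 1 0 ≤ _
      rw [T.mul_comm, T.mul_one]
      exact unitInterval.nonneg'
    · obtain ⟨y, h1, h2⟩ := ih2 x' y' x h h0
      exact (iInf_le (fun y => T.res (puSem T M γ x y) (pformSem T M φ y)) y).trans
        (T.aux_res h1 (ih y y' h2))
theorem aux_e {A P S S' : Type} (T : Tnorm) (M : FLTS A P S) (M' : FLTS A P S')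
    (hM : WitnessedP T M) (hM' : WitnessedP T M')
    (Z : S → S' → Prop) (hZ : IsDirSimulation M M' Z) :
    ∀ (α : PEProg A P), FwdSim Z (peSem T M α) (peSem T M' α)
  | .act ρ => by
    intro x y x' h h0
    simp only [peSem] at h0 ⊢
    exact hZ.2.1 x y x' ρ h h0
  | .comp α β => by
    have := FwdSim.comp T (aux_e T M M' hM hM' Z hZ α) (aux_e T M M' hM hM' Z hZ β)
      (hM.2.2.1 α β)
    intro x y x' h h0
    simp only [peSem] at h0 ⊢
    exact this x y x' h h0
  | .union α β => by
    have := FwdSim.union (aux_e T M M' hM hM' Z hZ α) (aux_e T M M' hM hM' Z hZ β)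
    intro x y x' h h0
    simp only [peSem] at h0 ⊢
    exact this x y x' h h0
  | .star α => by
    have := FwdSim.star T (aux_e T M M' hM hM' Z hZ α) (hM.2.2.2.2.1 α)
    intro x y x' h h0
    simp only [peSem] at h0 ⊢
    exact this x y x' h h0
  | .test φ => by
    have := FwdSim.test (aux_form T M M' hM hM' Z hZ φ)
    intro x y x' h h0
    simp only [peSem] at h0 ⊢
    exact this x y x' h h0
theorem aux_u {A P S S' : Type} (T : Tnorm) (M : FLTS A P S) (M' : FLTS A P S')
    (hM : WitnessedP T M) (hM' : WitnessedP T M')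
    (Z : S → S' → Prop) (hZ : IsDirSimulation M M' Z) :
    ∀ (α : PUProg A P), FwdSim (fun x' x => Z x x') (puSem T M' α) (puSem T M α)
  | .act ρ => by
    intro x y x' h h0
    simp only [puSem] at h0 ⊢
    exact hZ.2.2 x' x y ρ h h0
  | .comp α β => by
    have := FwdSim.comp T (aux_u T M M' hM hM' Z hZ α) (aux_u T M M' hM hM' Z hZ β)
      (hM'.2.2.2.1 α β)
    intro x y x' h h0
    simp only [puSem] at h0 ⊢
    exact this x y x' h h0
  | .union α β => by
    have := FwdSim.union (aux_u T M M' hM hM' Z hZ α) (aux_u T M M' hM hM' Z hZ β)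
    intro x y x' h h0
    simp only [puSem] at h0 ⊢
    exact this x y x' h h0
  | .star α => by
    have := FwdSim.star T (aux_u T M M' hM hM' Z hZ α) (hM'.2.2.2.2.2 α)
    intro x y x' h h0
    simp only [puSem] at h0 ⊢
    exact this x y x' h h0
  | .testImp φ a => by
    have ih := aux_form T M M' hM hM' Z hZ φ
    have := FwdSim.test (Z := fun x' x => Z x x')
      (f := fun x' => T.res (pformSem T M' φ x') a) (f' := fun x => T.res (pformSem T M φ x) a)
      (fun x' x h => T.aux_res (ih x x' h) le_rfl)
    intro x y x' h h0
    simp only [puSem] at h0 ⊢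
    exact this x y x' h h0
end

/-- Formulas of fposΔPDL are preserved under crisp directed simulations between
FLTSs witnessed w.r.t. fposΔPDL. -/
theorem preservation_dirSimulation_fposPDL
    {A P S S' : Type} [Nonempty A] [Nonempty P] [Nonempty S] [Nonempty S']
    (T : Tnorm) (M : FLTS A P S) (M' : FLTS A P S')
    (hM : WitnessedP T M) (hM' : WitnessedP T M')
    (Z : S → S' → Prop) (hZ : IsDirSimulation M M' Z) :
    ∀ (φ : PForm A P) (x : S) (x' : S'),
      Z x x' → pformSem T M φ x ≤ pformSem T M' φ x' := by
  exact aux_form T M M' hM hM' Z hZ
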